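/- Let n ≥ 1, let Φ: ℝⁿ → ℝ be a symmetric gauge function, let A ∈ ℂ^{n×n} be positive-imaginary (i.e., sectorial with all canonical phases in [0,π)), and let 0 ≤ r ≤ n. Then the minimum of Φ(φ₁(E⁻¹AE⁻¹),…,φₙ(E⁻¹AE⁻¹)) over all sectorial matrices E ∈ ℂ^{n×n} such that prank(E) ≤ r and E⁻¹AE⁻¹ is positive-imaginary equals Φ(0,…,0,φ_{r+1}(A),…,φₙ(A)), and this minimum is attained at every Ê ∈ S_p(A,r). -/

import Mathlib

noncomputable section

open Matrix
open scoped Classical ComplexOrder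

namespace LowPrank

variable {n : ℕ}

/-- A matrix is sectorial if its numerical range does not contain `0`
(`star x ⬝ᵥ x = 1` encodes `‖x‖₂ = 1`). -/
def IsSectorial (A : Matrix (Fin n) (Fin n) ℂ) : Prop :=
  ∀ x : Fin n → ℂ, star x ⬝ᵥ x = 1 → star x ⬝ᵥ A.mulVec x ≠ 0

/-- The diagonal unitary matrix `diag (e^{iφ₁}, …, e^{iφₙ})`. -/
def phaseDiag (φ : Fin n → ℝ) : Matrix (Fin n) (Fin n) ℂ :=
  Matrix.diagonal fun k => Complex.exp (Complex.I * (φ k : ℂ))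

/-- `A = Tᴴ diag (e^{iφ₁}, …, e^{iφₙ}) T` with `T` invertible. -/
def IsSectorialDecomp (A T : Matrix (Fin n) (Fin n) ℂ) (φ : Fin n → ℝ) : Prop :=
  IsUnit T ∧ A = Tᴴ * phaseDiag φ * T

/-- `φ` is the (sorted, normalized) vector of canonical phases of `A`:
nonincreasing, spread `< π`, midpoint of the range in `(-π, π]`, and realizing a
sectorial decomposition of `A`. -/
def IsCanonicalPhases (A : Matrix (Fin n) (Fin n) ℂ) (φ : Fin n → ℝ) : Prop :=
  Antitone φ ∧ (∀ i j, φ i - φ j < Real.pi) ∧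
    (-Real.pi < ((⨆ i, φ i) + ⨅ i, φ i) / 2) ∧ (((⨆ i, φ i) + ⨅ i, φ i) / 2 ≤ Real.pi) ∧
    ∃ T, IsSectorialDecomp A T φ

/-- The canonical phases `φ₁(A) ≥ ⋯ ≥ φₙ(A)` of a sectorial matrix
(`phases A k` is the `(k+1)`-st largest canonical phase). -/
noncomputable def phases (A : Matrix (Fin n) (Fin n) ℂ) : Fin n → ℝ :=
  if h : ∃ φ, IsCanonicalPhases A φ then h.choose else 0

/-- The phase-rank: the number of nonzero canonical phases. -/
noncomputable def prank (A : Matrix (Fin n) (Fin n) ℂ) : ℕ :=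
  {k : Fin n | phases A k ≠ 0}.ncard

/-- Positive-imaginary: sectorial with all canonical phases in `[0, π)`. -/
def PositiveImaginary (A : Matrix (Fin n) (Fin n) ℂ) : Prop :=
  IsSectorial A ∧ ∀ k, phases A k ∈ Set.Ico 0 Real.pi

/-- Symmetric gauge function. -/
structure IsSymmetricGauge (Φ : (Fin n → ℝ) → ℝ) : Prop where
  pos : ∀ x, x ≠ 0 → 0 < Φ x
  smul : ∀ (ρ : ℝ) (x), Φ (ρ • x) = |ρ| * Φ x
  subadd : ∀ x y, Φ (x + y) ≤ Φ x + Φ y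
  perm : ∀ (σ : Equiv.Perm (Fin n)) (x), Φ (x ∘ σ) = Φ x
  abs : ∀ x, Φ (fun k => |x k|) = Φ x

/-- The set `S_p(A, r)` of `r`-half-truncations of `A`. -/
def Sp (A : Matrix (Fin n) (Fin n) ℂ) (r : ℕ) : Set (Matrix (Fin n) (Fin n) ℂ) :=
  {E | ∃ T, IsSectorialDecomp A T (phases A) ∧
    E = Tᴴ * Matrix.diagonal (fun k : Fin n =>
      if (k : ℕ) < r then Complex.exp (Complex.I * ((phases A k / 2 : ℝ) : ℂ)) else 1) * T}



/-- The quadratic form of `A`. -/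
def qf (A : Matrix (Fin n) (Fin n) ℂ) (x : Fin n → ℂ) : ℂ := star x ⬝ᵥ A.mulVec x

lemma qf_decomp (T : Matrix (Fin n) (Fin n) ℂ) (d : Fin n → ℂ) (x : Fin n → ℂ) :
    qf (Tᴴ * Matrix.diagonal d * T) x
      = ∑ j, d j * ((Complex.normSq ((T *ᵥ x) j) : ℝ) : ℂ) := by
  unfold qf
  rw [← Matrix.mulVec_mulVec, ← Matrix.mulVec_mulVec, Matrix.dotProduct_mulVec,
    ← Matrix.star_mulVec]
  simp only [dotProduct, Matrix.mulVec_diagonal]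
  refine Finset.sum_congr rfl fun j _ => ?_
  rw [Complex.normSq_eq_conj_mul_self]
  simp only [Pi.star_apply, RCLike.star_def]
  ring

lemma qf_phase_aux (T : Matrix (Fin n) (Fin n) ℂ) (φ : Fin n → ℝ) (c : ℝ) (x : Fin n → ℂ) :
    Complex.exp (-(Complex.I * c)) * qf (Tᴴ * phaseDiag φ * T) x
      = ∑ j, Complex.exp (((φ j - c : ℝ) : ℂ) * Complex.I)
          * ((Complex.normSq ((T *ᵥ x) j) : ℝ) : ℂ) := by
  unfold phaseDiag
  rw [qf_decomp, Finset.mul_sum]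
  refine Finset.sum_congr rfl fun j _ => ?_
  rw [← mul_assoc, ← Complex.exp_add]
  congr 2
  push_cast
  ring

lemma qf_im (T : Matrix (Fin n) (Fin n) ℂ) (φ : Fin n → ℝ) (c : ℝ) (x : Fin n → ℂ) :
    (Complex.exp (-(Complex.I * c)) * qf (Tᴴ * phaseDiag φ * T) x).im
      = ∑ j, Real.sin (φ j - c) * Complex.normSq ((T *ᵥ x) j) := by
  rw [qf_phase_aux, Complex.im_sum]
  refine Finset.sum_congr rfl fun j _ => ?_
  rw [Complex.im_mul_ofReal, Complex.exp_ofReal_mul_I_im]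

lemma qf_re (T : Matrix (Fin n) (Fin n) ℂ) (φ : Fin n → ℝ) (c : ℝ) (x : Fin n → ℂ) :
    (Complex.exp (-(Complex.I * c)) * qf (Tᴴ * phaseDiag φ * T) x).re
      = ∑ j, Real.cos (φ j - c) * Complex.normSq ((T *ᵥ x) j) := by
  rw [qf_phase_aux, Complex.re_sum]
  refine Finset.sum_congr rfl fun j _ => ?_
  rw [Complex.re_mul_ofReal, Complex.exp_ofReal_mul_I_re]

lemma unit_mulVec_ne {T : Matrix (Fin n) (Fin n) ℂ} (hT : IsUnit T) {x : Fin n → ℂ}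
    (hx : x ≠ 0) : ∃ j, (T *ᵥ x) j ≠ 0 := by
  by_contra! h
  apply hx
  have := Matrix.mulVec_injective_of_isUnit hT
  apply this
  rw [Matrix.mulVec_zero]
  ext j
  exact h j

lemma sum_pos_aux {f g : Fin n → ℝ} (hg : ∀ j, 0 ≤ g j) (hf : ∀ j, g j ≠ 0 → 0 < f j)
    (h : ∃ j, g j ≠ 0) : 0 < ∑ j, f j * g j := by
  have hnn : ∀ j, 0 ≤ f j * g j := fun j => by
    by_cases h0 : g j = 0
    · simp [h0]
    · exact mul_nonneg (hf j h0).le (hg j)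
  obtain ⟨j, hj⟩ := h
  refine Finset.sum_pos' (fun j _ => hnn j) ⟨j, Finset.mem_univ _, ?_⟩
  exact mul_pos (hf j hj) (lt_of_le_of_ne (hg j) (Ne.symm hj))

/-- Min-max comparison. -/
lemma compare {A M T S R : Matrix (Fin n) (Fin n) ℂ} {α γ : Fin n → ℝ}
    (hT : IsSectorialDecomp A T α) (hS : IsSectorialDecomp M S γ)
    (hα : Antitone α) (hγ : Antitone γ)
    (hαγ : ∀ i j, α i - γ j < Real.pi) (hγγ : ∀ i j, γ i - γ j < Real.pi)
    (r : ℕ) (J : Finset (Fin n)) (hJ : J.card ≤ r)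
    (hq : ∀ x, (∀ j ∈ J, (R *ᵥ x) j = 0) → qf A x = qf M x)
    (k l : Fin n) (hkl : (l : ℕ) = k + r) : α l ≤ γ k := by
  by_contra! hlt
  -- find the vector
  let L : (Fin n → ℂ) →ₗ[ℂ] ((Finset.Ioi l → ℂ) × (Finset.Iio k → ℂ) × (J → ℂ)) :=
    LinearMap.prod (LinearMap.pi fun j => LinearMap.proj (j : Fin n) ∘ₗ T.mulVecLin)
      (LinearMap.prod (LinearMap.pi fun j => LinearMap.proj (j : Fin n) ∘ₗ S.mulVecLin)
       (LinearMap.pi fun j => LinearMap.proj (j : Fin n) ∘ₗ R.mulVecLin))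
  have hker : LinearMap.ker L ≠ ⊥ := by
    apply LinearMap.ker_ne_bot_of_finrank_lt
    simp only [Module.finrank_prod, Module.finrank_pi, Fintype.card_coe, Fin.card_Ioi,
      Fin.card_Iio, Fintype.card_fin]
    have := l.2
    omega
  obtain ⟨x, hxL, hx⟩ := (Submodule.ne_bot_iff _).1 hker
  rw [LinearMap.mem_ker] at hxL
  have h1 : ∀ j, l < j → (T *ᵥ x) j = 0 := fun j hj =>
    congrFun (congrArg Prod.fst hxL) ⟨j, by simpa using hj⟩
  have h2 : ∀ j, j < k → (S *ᵥ x) j = 0 := fun j hj =>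
    congrFun (congrArg (fun p => p.2.1) hxL) ⟨j, by simpa using hj⟩
  have h3 : ∀ j ∈ J, (R *ᵥ x) j = 0 := fun j hj =>
    congrFun (congrArg (fun p => p.2.2) hxL) ⟨j, hj⟩
  have e := hq x h3
  have e1 := qf_im T α (γ k) x
  have e2 := qf_im S γ (γ k) x
  rw [← hT.2] at e1
  rw [← hS.2] at e2
  rw [e, e2] at e1
  have p1 : 0 < ∑ j, Real.sin (α j - γ k) * Complex.normSq ((T *ᵥ x) j) := by
    apply sum_pos_aux (fun j => Complex.normSq_nonneg _)
    · intro j hj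
      have hjl : j ≤ l := by
        by_contra! hc
        exact hj (by rw [h1 j hc]; simp)
      have := hα hjl
      exact Real.sin_pos_of_pos_of_lt_pi (by linarith) (hαγ j k)
    · obtain ⟨j, hj⟩ := unit_mulVec_ne hT.1 hx
      exact ⟨j, by simpa using hj⟩
  have p2 : ∑ j, Real.sin (γ j - γ k) * Complex.normSq ((S *ᵥ x) j) ≤ 0 := by
    apply Finset.sum_nonpos
    intro j _
    by_cases hjk : j < k
    · rw [h2 j hjk]; simp
    · have := hγ (not_lt.1 hjk)
      have h4 := hγγ k j
      exact mul_nonpos_of_nonpos_of_nonneg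
        (Real.sin_nonpos_of_nonpos_of_neg_pi_le (by linarith) (by linarith))
        (Complex.normSq_nonneg _)
  linarith

lemma gauge_step {Φ : (Fin n → ℝ) → ℝ} (hΦ : IsSymmetricGauge Φ) (x : Fin n → ℝ) (i : Fin n)
    (t : ℝ) (ht : |t| ≤ |x i|) : Φ (Function.update x i t) ≤ Φ x := by
  have key : ∀ (x : Fin n → ℝ), Φ (Function.update x i (-(x i))) = Φ x := by
    intro x
    rw [← hΦ.abs, ← hΦ.abs x]
    congr 1
    ext j
    by_cases h : j = i
    · subst h; simp
    · simp [h]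
  obtain ⟨s, hs, hst⟩ : ∃ s : ℝ, |s| ≤ 1 ∧ t = s * x i := by
    by_cases h0 : x i = 0
    · refine ⟨0, by simp, ?_⟩
      rw [h0, abs_zero] at ht
      simpa using abs_nonpos_iff.1 ht
    · refine ⟨t / x i, ?_, by field_simp⟩
      rw [abs_div, div_le_one (abs_pos.2 h0)]
      exact ht
  have hs' := abs_le.1 hs
  have e : Function.update x i t
      = ((1 + s) / 2) • x + ((1 - s) / 2) • Function.update x i (-(x i)) := by
    ext j
    by_cases h : j = i
    · subst h; simp [hst]; ring
    · simp [h]; ring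
  rw [e]
  refine (hΦ.subadd _ _).trans ?_
  rw [hΦ.smul, hΦ.smul, key, abs_of_nonneg (by linarith), abs_of_nonneg (by linarith)]
  apply le_of_eq
  ring

lemma gauge_mono {Φ : (Fin n → ℝ) → ℝ} (hΦ : IsSymmetricGauge Φ) (x y : Fin n → ℝ)
    (hxy : ∀ i, |x i| ≤ |y i|) : Φ x ≤ Φ y := by
  have : ∀ s : Finset (Fin n), Φ (fun i => if i ∈ s then x i else y i) ≤ Φ y := by
    intro s
    induction s using Finset.induction_on with
    | empty => simp
    | insert a s ha ih =>
      refine le_trans ?_ ih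
      have := gauge_step hΦ (fun i => if i ∈ s then x i else y i) a (x a) (by simpa [ha] using hxy a)
      have e : (fun i => if i ∈ insert a s then x i else y i)
          = Function.update (fun i => if i ∈ s then x i else y i) a (x a) := by
        funext j
        by_cases h : j = a
        · subst h; simp
        · simp [h]
      rw [e]
      exact this
  simpa using this Finset.univ

lemma shift_perm [NeZero n] (α : Fin n → ℝ) (r : ℕ) (hr : r ≤ n) :
    ∃ σ : Equiv.Perm (Fin n),
      (fun k : Fin n => if (k : ℕ) < r then 0 else α k) ∘ σ
        = (fun k : Fin n => if h : (k : ℕ) + r < n then α ⟨k + r, h⟩ else 0) := by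
  refine ⟨Equiv.addRight (Fin.ofNat n r), ?_⟩
  symm
  ext k
  have hv : ((k + Fin.ofNat n r : Fin n) : ℕ) = (k + r) % n := by
    simp [Fin.val_add]
  have hk := k.2
  change _ = (fun k : Fin n => if (k : ℕ) < r then 0 else α k) (k + Fin.ofNat n r)
  beta_reduce
  by_cases h : (k : ℕ) + r < n
  · rw [dif_pos h, if_neg]
    · congr 1
      ext
      rw [hv, Nat.mod_eq_of_lt h]
    · rw [hv, Nat.mod_eq_of_lt h]; omega
  · rw [dif_neg h, if_pos]
    rw [hv]
    by_cases hrn : r = n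
    · rw [hrn]; exact Nat.mod_lt _ (by omega)
    · rw [Nat.mod_eq_sub_mod (by omega), Nat.mod_eq_of_lt (by omega)]
      omega

lemma re_pos_of_decomp {A T : Matrix (Fin n) (Fin n) ℂ} {φ : Fin n → ℝ} {m : ℝ}
    (hT : IsSectorialDecomp A T φ) (hm : ∀ j, |φ j - m| < Real.pi / 2)
    {x : Fin n → ℂ} (hx : x ≠ 0) : 0 < (Complex.exp (-(Complex.I * m)) * qf A x).re := by
  rw [hT.2, qf_re]
  apply sum_pos_aux (fun j => Complex.normSq_nonneg _)
  · intro j _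
    have := abs_lt.1 (hm j)
    exact Real.cos_pos_of_mem_Ioo ⟨by linarith, this.2⟩
  · obtain ⟨j, hj⟩ := unit_mulVec_ne hT.1 hx
    exact ⟨j, by simpa using hj⟩

lemma sectorial_of_decomp {A T : Matrix (Fin n) (Fin n) ℂ} {φ : Fin n → ℝ} {m : ℝ}
    (hT : IsSectorialDecomp A T φ) (hm : ∀ j, |φ j - m| < Real.pi / 2) : IsSectorial A := by
  intro x hx h0
  have hx0 : x ≠ 0 := by rintro rfl; simp at hx
  have := re_pos_of_decomp hT hm hx0
  rw [show qf A x = 0 from h0] at this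
  simp at this

lemma mid_bound [NeZero n] {φ : Fin n → ℝ} (h : ∀ i j, φ i - φ j < Real.pi) (k : Fin n) :
    |φ k - ((⨆ i, φ i) + ⨅ i, φ i) / 2| < Real.pi / 2 := by
  obtain ⟨a, ha⟩ := exists_eq_ciSup_of_finite (f := φ)
  obtain ⟨b, hb⟩ := exists_eq_ciInf_of_finite (f := φ)
  have h1 : φ k ≤ ⨆ i, φ i := le_ciSup (Set.finite_range φ).bddAbove k
  have h2 : ⨅ i, φ i ≤ φ k := ciInf_le (Set.finite_range φ).bddBelow k
  have h3 := h a b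
  rw [abs_lt]
  constructor <;> linarith

lemma canonical_unique [NeZero n] {A : Matrix (Fin n) (Fin n) ℂ} {φ ψ : Fin n → ℝ}
    (hφ : IsCanonicalPhases A φ) (hψ : IsCanonicalPhases A ψ) : φ = ψ := by
  obtain ⟨a1, s1, l1, u1, T, hT⟩ := hφ
  obtain ⟨a2, s2, l2, u2, S, hS⟩ := hψ
  have b1 := mid_bound s1
  set m := ((⨆ i, φ i) + ⨅ i, φ i) / 2 with hm
  have hcos : ∀ j, 0 < Real.cos (ψ j - m) := by
    intro j
    obtain ⟨x, hx⟩ := Matrix.mulVec_surjective_iff_isUnit.2 hS.1 (Pi.single j 1)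
    have hx0 : x ≠ 0 := by
      rintro rfl
      have := congrFun hx j
      simp at this
    have := re_pos_of_decomp hT b1 hx0
    rw [hS.2, qf_re, hx, Finset.sum_eq_single j] at this
    · simpa using this
    · intro b _ hb
      simp [hb]
    · simp
  have hk : ∀ j, ∃ k : ℤ, |ψ j - 2 * Real.pi * k - m| < Real.pi / 2 := by
    intro j
    have hpi : (0 : ℝ) < 2 * Real.pi := by positivity
    refine ⟨toIocDiv hpi (-Real.pi) (ψ j - m), ?_⟩
    set k := toIocDiv hpi (-Real.pi) (ψ j - m)
    have h1 := sub_toIocDiv_zsmul_mem_Ioc hpi (-Real.pi) (ψ j - m)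
    have h2 := hcos j
    rw [← Real.cos_sub_int_mul_two_pi _ k] at h2
    have e : ψ j - m - k * (2 * Real.pi) = ψ j - 2 * Real.pi * k - m := by ring
    rw [e] at h2
    rw [zsmul_eq_mul, e] at h1
    set y := ψ j - 2 * Real.pi * k - m
    by_contra! hc
    rw [← Real.cos_abs] at h2
    have h3 : |y| ≤ Real.pi := abs_le.2 ⟨h1.1.le, by linarith [h1.2]⟩
    have := Real.cos_nonpos_of_pi_div_two_le_of_le hc (by linarith)
    linarith
  choose K hK using hk
  have hKK : ∀ i, K i = K 0 := by
    intro i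
    have h1 := abs_lt.1 (hK i)
    have h2 := abs_lt.1 (hK 0)
    have h3 := s2 i 0
    have h4 := s2 0 i
    have hp := Real.pi_pos
    have e1 : (K i : ℝ) - K 0 < 1 := by
      by_contra! hc
      nlinarith
    have e2 : (K 0 : ℝ) - K i < 1 := by
      by_contra! hc
      nlinarith
    have e1' : K i - K 0 < 1 := by exact_mod_cast e1
    have e2' : K 0 - K i < 1 := by exact_mod_cast e2
    omega
  set k := K 0
  have hK' : ∀ j, |ψ j - 2 * Real.pi * k - m| < Real.pi / 2 := fun j => by
    have := hK j
    rwa [hKK j] at this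
  -- shifted
  set ψ' : Fin n → ℝ := fun j => ψ j - 2 * Real.pi * k with hψ'
  have hS' : IsSectorialDecomp A S ψ' := by
    refine ⟨hS.1, ?_⟩
    rw [hS.2]
    congr 2
    unfold phaseDiag
    congr 1
    ext j
    rw [Complex.exp_eq_exp_iff_exists_int]
    refine ⟨k, ?_⟩
    simp only [hψ']
    push_cast
    ring
  have a2' : Antitone ψ' := fun i j hij => by
    have := a2 hij
    simp only [hψ']; linarith
  have d1 : ∀ i j, φ i - ψ' j < Real.pi := fun i j => by
    have h1 := abs_lt.1 (b1 i)
    have h2 := abs_lt.1 (hK' j)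
    simp only [hψ']; linarith
  have d2 : ∀ i j, ψ' i - φ j < Real.pi := fun i j => by
    have h1 := abs_lt.1 (b1 j)
    have h2 := abs_lt.1 (hK' i)
    simp only [hψ']; linarith
  have s2' : ∀ i j, ψ' i - ψ' j < Real.pi := fun i j => by
    have := s2 i j
    simp only [hψ']; linarith
  have heq : ∀ j, φ j = ψ' j := fun j => le_antisymm
    (compare (R := 1) hT hS' a1 a2' d1 s2' 0 ∅ (by simp) (fun _ _ => rfl) j j (by simp))
    (compare (R := 1) hS' hT a2' a1 d2 s1 0 ∅ (by simp) (fun _ _ => rfl) j j (by simp))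
  have hsup : ⨆ i, ψ i = (⨆ i, φ i) + 2 * Real.pi * k := by
    rw [ciSup_add (Set.finite_range φ).bddAbove]
    congr 1; ext j; rw [heq j]; simp [hψ']
  have hinf : ⨅ i, ψ i = (⨅ i, φ i) + 2 * Real.pi * k := by
    rw [ciInf_add (Set.finite_range φ).bddBelow]
    congr 1; ext j; rw [heq j]; simp [hψ']
  have hk0 : k = 0 := by
    rw [hsup, hinf] at l2 u2
    have hp := Real.pi_pos
    have e1 : (k : ℝ) < 1 := by
      by_contra! hc
      nlinarith
    have e2 : (-1 : ℝ) < k := by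
      by_contra! hc
      nlinarith
    have e1' : k < 1 := by exact_mod_cast e1
    have e2' : -1 < k := by exact_mod_cast e2
    omega
  ext j
  rw [heq j]
  simp [hψ', hk0]

lemma phases_eq [NeZero n] {A : Matrix (Fin n) (Fin n) ℂ} {φ : Fin n → ℝ}
    (hφ : IsCanonicalPhases A φ) : phases A = φ := by
  have h : ∃ φ, IsCanonicalPhases A φ := ⟨φ, hφ⟩
  unfold phases
  rw [dif_pos h]
  exact canonical_unique h.choose_spec hφ

lemma canonical_of_nonneg [NeZero n] {A T : Matrix (Fin n) (Fin n) ℂ} {φ : Fin n → ℝ}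
    (hT : IsSectorialDecomp A T φ) (ha : Antitone φ) (h : ∀ k, φ k ∈ Set.Ico 0 Real.pi) :
    IsCanonicalPhases A φ ∧ IsSectorial A := by
  have hs : ∀ i j, φ i - φ j < Real.pi := fun i j => by
    have := (h i).2
    have := (h j).1
    linarith
  refine ⟨⟨ha, hs, ?_, ?_, T, hT⟩, sectorial_of_decomp hT (mid_bound hs)⟩
  · have h1 := abs_lt.1 (mid_bound hs 0)
    have := (h 0).1
    have := Real.pi_pos
    linarith
  · obtain ⟨a, ha⟩ := exists_eq_ciSup_of_finite (f := φ)
    obtain ⟨b, hb⟩ := exists_eq_ciInf_of_finite (f := φ)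
    have := (h a).2
    have := (h b).2
    linarith

lemma qf_smul_vec (A : Matrix (Fin n) (Fin n) ℂ) (c : ℂ) (x : Fin n → ℂ) :
    qf A (c • x) = ((Complex.normSq c : ℝ) : ℂ) * qf A x := by
  unfold qf
  rw [Matrix.mulVec_smul, star_smul, smul_dotProduct, dotProduct_smul,
    Complex.normSq_eq_conj_mul_self]
  simp only [smul_eq_mul, RCLike.star_def]
  ring

lemma qf_smul_mat (A : Matrix (Fin n) (Fin n) ℂ) (c : ℂ) (x : Fin n → ℂ) :
    qf (c • A) x = c * qf A x := by
  unfold qf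
  rw [Matrix.smul_mulVec, dotProduct_smul, smul_eq_mul]

lemma qf_ne {A : Matrix (Fin n) (Fin n) ℂ} (hA : IsSectorial A) {x : Fin n → ℂ} (hx : x ≠ 0) :
    qf A x ≠ 0 := by
  have e : star x ⬝ᵥ x = ((∑ j, Complex.normSq (x j) : ℝ) : ℂ) := by
    simp only [dotProduct, Pi.star_apply, Complex.ofReal_sum, Complex.normSq_eq_conj_mul_self,
      RCLike.star_def]
  set N := ∑ j, Complex.normSq (x j) with hN
  have hpos : 0 < N := by
    obtain ⟨j, hj⟩ := Function.ne_iff.1 hx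
    exact Finset.sum_pos' (fun j _ => Complex.normSq_nonneg _)
      ⟨j, Finset.mem_univ _, Complex.normSq_pos.2 hj⟩
  have hs : Real.sqrt N ≠ 0 := (Real.sqrt_pos.2 hpos).ne'
  have h := hA ((((Real.sqrt N)⁻¹ : ℝ) : ℂ) • x) (by
    rw [star_smul, smul_dotProduct, dotProduct_smul, e]
    simp only [smul_eq_mul, RCLike.star_def, Complex.conj_ofReal]
    norm_cast
    have := Real.mul_self_sqrt hpos.le
    field_simp
    nlinarith)
  intro h0
  apply h
  change qf A _ = 0
  rw [qf_smul_vec, h0, mul_zero]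

lemma sectorial_smul {A : Matrix (Fin n) (Fin n) ℂ} (hA : IsSectorial A) {c : ℂ} (hc : c ≠ 0) :
    IsSectorial (c • A) := by
  intro x hx
  change qf _ _ ≠ 0
  rw [qf_smul_mat]
  exact mul_ne_zero hc (hA x hx)

lemma exists_unit_phase (w : ℂ) : ∃ u : ℂ, Complex.normSq u = 1 ∧ (u * w).im = 0 := by
  by_cases hw : w = 0
  · exact ⟨1, by simp, by simp [hw]⟩
  · refine ⟨Complex.exp ((-Complex.arg w : ℝ) * Complex.I), ?_, ?_⟩
    · rw [Complex.normSq_eq_norm_sq, Complex.norm_exp_ofReal_mul_I]; norm_num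
    · nth_rewrite 2 [← Complex.norm_mul_exp_arg_mul_I w]
      rw [mul_left_comm, ← Complex.exp_add]
      simp

lemma qf_comb (A : Matrix (Fin n) (Fin n) ℂ) (s t : ℝ) (u : ℂ) (x y : Fin n → ℂ) :
    qf A ((s : ℂ) • x + (t : ℂ) • u • y)
      = (s : ℂ) ^ 2 * qf A x + (t : ℂ) ^ 2 * ((Complex.normSq u : ℝ) : ℂ) * qf A y
        + s * t * (u * (star x ⬝ᵥ A.mulVec y) + star u * (star y ⬝ᵥ A.mulVec x)) := by
  unfold qf
  simp only [Matrix.mulVec_add, Matrix.mulVec_smul, star_add, star_smul, add_dotProduct,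
    dotProduct_add, smul_dotProduct, dotProduct_smul, smul_eq_mul, RCLike.star_def,
    Complex.conj_ofReal, Complex.normSq_eq_conj_mul_self]
  ring

lemma no_antipodal {A : Matrix (Fin n) (Fin n) ℂ} (hA : IsSectorial A) {x y : Fin n → ℂ}
    {a b : ℝ} (hx : qf A x = a) (hy : qf A y = b) (ha : 0 < a) (hb : b < 0) : False := by
  obtain ⟨u, hu, hw⟩ := exists_unit_phase ((star x ⬝ᵥ A.mulVec y) - star (star y ⬝ᵥ A.mulVec x))
  set p := star x ⬝ᵥ A.mulVec y with hp
  set q := star y ⬝ᵥ A.mulVec x with hq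
  have hcr : (u * p + star u * q).im = 0 := by
    simp only [RCLike.star_def, Complex.mul_im, Complex.add_im, Complex.sub_im, Complex.sub_re,
      Complex.conj_re, Complex.conj_im] at hw ⊢
    linarith
  set g := (u * p + star u * q).re with hg
  have hgc : u * p + star u * q = (g : ℂ) := by
    apply Complex.ext
    · rw [Complex.ofReal_re]
    · rw [Complex.ofReal_im, hcr]
  have hz : ∀ t : ℝ, qf A (((1 - t : ℝ) : ℂ) • x + (t : ℂ) • u • y)
      = (((1 - t) ^ 2 * a + t ^ 2 * b + (1 - t) * t * g : ℝ) : ℂ) := by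
    intro t
    rw [qf_comb, hx, hy, hu, ← hp, ← hq, hgc]
    push_cast
    ring
  have hcont : Continuous fun t : ℝ => (1 - t) ^ 2 * a + t ^ 2 * b + (1 - t) * t * g := by
    fun_prop
  obtain ⟨t, -, ht⟩ := intermediate_value_Icc' (zero_le_one (α := ℝ)) hcont.continuousOn
    (show (0 : ℝ) ∈ Set.Icc _ _ from ⟨by simp; linarith, by simp; linarith⟩)
  have hzt := hz t
  beta_reduce at ht
  rw [ht, Complex.ofReal_zero] at hzt
  have hz0 : (((1 - t : ℝ) : ℂ) • x + (t : ℂ) • u • y) = 0 := by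
    by_contra h
    exact qf_ne hA h hzt
  have h1 : ((1 - t : ℝ) : ℂ) • x = -((t : ℂ) * u) • y := by
    rw [neg_smul, ← smul_smul]
    exact eq_neg_of_add_eq_zero_left hz0
  have h2 := congrArg (qf A) h1
  rw [qf_smul_vec, qf_smul_vec, hx, hy, Complex.normSq_neg, Complex.normSq_mul, hu,
    Complex.normSq_ofReal, Complex.normSq_ofReal] at h2
  have h3 : (1 - t) * (1 - t) * a = t * t * 1 * b := by exact_mod_cast h2
  have h4 : 0 ≤ (1 - t) * (1 - t) * a := mul_nonneg (mul_self_nonneg _) ha.le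
  have h5 : t * t * 1 * b ≤ 0 :=
    mul_nonpos_of_nonneg_of_nonpos (by simpa using mul_self_nonneg t) hb.le
  have h6 : (1 - t) * (1 - t) * a = 0 := by linarith
  have h7 : t * t * 1 * b = 0 := by linarith
  have h8 : 1 - t = 0 := by simpa [ha.ne'] using h6
  have h9 : t = 0 := by simpa [hb.ne] using h7
  rw [h9] at h8
  norm_num at h8

lemma continuous_qf (A : Matrix (Fin n) (Fin n) ℂ) : Continuous (qf A) := by
  unfold qf
  simp only [dotProduct, Matrix.mulVec]
  fun_prop

lemma exists_halfplane [NeZero n] {A : Matrix (Fin n) (Fin n) ℂ} (hA : IsSectorial A) :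
    ∃ c : ℂ, c ≠ 0 ∧ ∀ x, x ≠ 0 → 0 < (c * qf A x).re := by
  set x0 : Fin n → ℂ := Pi.single 0 1 with hx0
  have hx0n : x0 ≠ 0 := by simp [hx0]
  set z0 := qf A x0 with hz0
  have hz0n : z0 ≠ 0 := qf_ne hA hx0n
  set B := z0⁻¹ • A with hB
  have hBs : IsSectorial B := sectorial_smul hA (inv_ne_zero hz0n)
  have hB0 : qf B x0 = ((1 : ℝ) : ℂ) := by
    rw [hB, qf_smul_mat, ← hz0, inv_mul_cancel₀ hz0n, Complex.ofReal_one]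
  have hslit : ∀ x, x ≠ 0 → qf B x ∈ Complex.slitPlane := by
    intro x hx
    by_contra hc
    rw [Complex.mem_slitPlane_iff, not_or, not_lt, not_not] at hc
    have e : qf B x = ((qf B x).re : ℂ) := by apply Complex.ext <;> simp [hc.2]
    refine no_antipodal hBs hB0 e one_pos (lt_of_le_of_ne hc.1 fun h => ?_)
    rw [h] at e
    exact qf_ne hBs hx (by simpa using e)
  set S : Set (Fin n → ℂ) := Metric.sphere 0 1 with hS
  have hSne : ∀ x ∈ S, x ≠ 0 := by
    rintro x hx rfl
    simp [hS] at hx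
  have hrank : 1 < Module.rank ℝ (Fin n → ℂ) := by
    have : 1 < Module.finrank ℝ (Fin n → ℂ) := by
      rw [Module.finrank_pi_fintype]
      simp only [Complex.finrank_real_complex, Finset.sum_const, Finset.card_univ,
        Fintype.card_fin, smul_eq_mul]
      have := NeZero.pos n
      omega
    rw [← Module.finrank_eq_rank]
    exact_mod_cast this
  have hconn : IsConnected S := isConnected_sphere hrank 0 zero_le_one
  have hcomp : IsCompact S := isCompact_sphere 0 1
  set f : (Fin n → ℂ) → ℝ := fun x => Complex.arg (qf B x) with hf
  have hfc : ContinuousOn f S := by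
    intro x hx
    exact ((Complex.continuousAt_arg (hslit x (hSne x hx))).comp
      (continuous_qf B).continuousAt).continuousWithinAt
  obtain ⟨xa, hxa, hmin⟩ := hcomp.exists_isMinOn hconn.nonempty hfc
  obtain ⟨xb, hxb, hmax⟩ := hcomp.exists_isMaxOn hconn.nonempty hfc
  have hpolar : ∀ x, qf B x = (‖qf B x‖ : ℂ) * Complex.exp (f x * Complex.I) := fun x =>
    (Complex.norm_mul_exp_arg_mul_I (qf B x)).symm
  have hspread : f xb - f xa < Real.pi := by
    by_contra! hc
    have hmem : f xa + Real.pi ∈ f '' S := by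
      apply hconn.isPreconnected.intermediate_value hxa hxb hfc
      exact ⟨by linarith [Real.pi_pos], by linarith⟩
    obtain ⟨y, hy, hfy⟩ := hmem
    have hCs : IsSectorial (Complex.exp (-(f xa * Complex.I)) • B) :=
      sectorial_smul hBs (Complex.exp_ne_zero _)
    refine no_antipodal hCs (x := xa) (y := y) (a := ‖qf B xa‖) (b := -‖qf B y‖) ?_ ?_
      (norm_pos_iff.2 (qf_ne hBs (hSne _ hxa)))
      (neg_lt_zero.2 (norm_pos_iff.2 (qf_ne hBs (hSne _ hy))))
    · rw [qf_smul_mat]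
      nth_rewrite 1 [hpolar xa]
      rw [mul_left_comm, ← Complex.exp_add]
      simp
    · rw [qf_smul_mat]
      nth_rewrite 1 [hpolar y]
      rw [hfy, mul_left_comm, ← Complex.exp_add]
      have : -((f xa : ℂ) * Complex.I) + ((f xa + Real.pi : ℝ) : ℂ) * Complex.I
          = Real.pi * Complex.I := by push_cast; ring
      rw [this, Complex.exp_pi_mul_I]
      push_cast
      ring
  set m := (f xa + f xb) / 2 with hm
  have hSpos : ∀ x ∈ S, 0 < (Complex.exp (-(m * Complex.I)) * qf B x).re := by
    intro x hx
    rw [hpolar x, mul_left_comm, ← Complex.exp_add]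
    have : -((m : ℂ) * Complex.I) + (f x : ℂ) * Complex.I = ((f x - m : ℝ) : ℂ) * Complex.I := by
      push_cast; ring
    rw [this, Complex.re_ofReal_mul, Complex.exp_ofReal_mul_I_re]
    have h1 : f xa ≤ f x := hmin hx
    have h2 : f x ≤ f xb := hmax hx
    exact mul_pos (norm_pos_iff.2 (qf_ne hBs (hSne _ hx)))
      (Real.cos_pos_of_mem_Ioo ⟨by linarith, by linarith⟩)
  refine ⟨Complex.exp (-(m * Complex.I)) * z0⁻¹,
    mul_ne_zero (Complex.exp_ne_zero _) (inv_ne_zero hz0n), fun x hx => ?_⟩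
  have hxn : 0 < ‖x‖ := norm_pos_iff.2 hx
  have h := hSpos (((‖x‖⁻¹ : ℝ) : ℂ) • x) (by
    simp only [hS, mem_sphere_zero_iff_norm, norm_smul, Complex.norm_real, norm_inv, norm_norm]
    exact inv_mul_cancel₀ hxn.ne')
  rw [qf_smul_vec, mul_left_comm, Complex.re_ofReal_mul, hB, qf_smul_mat, ← mul_assoc] at h
  exact pos_of_mul_pos_right h (Complex.normSq_nonneg _)

lemma herm_diag {H : Matrix (Fin n) (Fin n) ℂ} (hH : H.IsHermitian) :
    ∃ (U : Matrix (Fin n) (Fin n) ℂ) (d : Fin n → ℝ), IsUnit U ∧ Uᴴ * U = 1 ∧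
      H = Uᴴ * Matrix.diagonal (fun j => (d j : ℂ)) * U := by
  have h := hH.spectral_theorem
  rw [Unitary.conjStarAlgAut_apply] at h
  set V : Matrix (Fin n) (Fin n) ℂ := (hH.eigenvectorUnitary : Matrix (Fin n) (Fin n) ℂ)
  have hV : V * Vᴴ = 1 := Unitary.coe_mul_star_self hH.eigenvectorUnitary
  have hV' : Vᴴ * V = 1 := Unitary.coe_star_mul_self hH.eigenvectorUnitary
  refine ⟨Vᴴ, hH.eigenvalues, ?_, ?_, ?_⟩
  · exact IsUnit.of_mul_eq_one V hV'
  · rw [Matrix.conjTranspose_conjTranspose]; exact hV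
  · rw [Matrix.conjTranspose_conjTranspose]; exact h

lemma posdef_factor {H : Matrix (Fin n) (Fin n) ℂ} (hH : H.IsHermitian)
    (hp : ∀ x, x ≠ 0 → 0 < (qf H x).re) :
    ∃ S : Matrix (Fin n) (Fin n) ℂ, IsUnit S ∧ H = Sᴴ * S := by
  obtain ⟨U, d, hU, -, hd⟩ := herm_diag hH
  have hdpos : ∀ j, 0 < d j := by
    intro j
    obtain ⟨x, hx⟩ := Matrix.mulVec_surjective_iff_isUnit.2 hU (Pi.single j 1)
    have hx0 : x ≠ 0 := by
      rintro rfl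
      have := congrFun hx j
      simp at this
    have := hp x hx0
    rw [hd, qf_decomp, hx, Finset.sum_eq_single j] at this
    · simpa using this
    · intro b _ hb
      simp [hb]
    · simp
  refine ⟨Matrix.diagonal (fun j => ((Real.sqrt (d j) : ℝ) : ℂ)) * U, ?_, ?_⟩
  · refine IsUnit.mul ?_ hU
    rw [Matrix.isUnit_diagonal, Pi.isUnit_iff]
    intro j
    have := (Real.sqrt_pos.2 (hdpos j)).ne'
    simpa using this
  · rw [Matrix.conjTranspose_mul, Matrix.diagonal_conjTranspose, hd, Matrix.mul_assoc,
      Matrix.mul_assoc, ← Matrix.mul_assoc (Matrix.diagonal _) (Matrix.diagonal _) U,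
      Matrix.diagonal_mul_diagonal]
    congr 3
    ext j
    simp only [Pi.star_apply, RCLike.star_def, Complex.conj_ofReal]
    rw [← Complex.ofReal_mul, Real.mul_self_sqrt (hdpos j).le]

lemma qf_conjTranspose (B : Matrix (Fin n) (Fin n) ℂ) (x : Fin n → ℂ) :
    qf Bᴴ x = star (qf B x) := by
  unfold qf
  rw [Matrix.star_dotProduct, Matrix.star_mulVec, Matrix.conjTranspose_conjTranspose,
    ← Matrix.dotProduct_mulVec]

lemma exists_decomp_raw [NeZero n] {A : Matrix (Fin n) (Fin n) ℂ} (hA : IsSectorial A) :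
    ∃ (T : Matrix (Fin n) (Fin n) ℂ) (φ : Fin n → ℝ), IsSectorialDecomp A T φ ∧
      ∀ i j, φ i - φ j < Real.pi := by
  obtain ⟨c, hc, hpos⟩ := exists_halfplane hA
  set B := c • A with hB
  set H : Matrix (Fin n) (Fin n) ℂ := (1 / 2 : ℂ) • (B + Bᴴ) with hH
  set K : Matrix (Fin n) (Fin n) ℂ := (-Complex.I / 2 : ℂ) • (B - Bᴴ) with hK
  have hHh : H.IsHermitian := by
    unfold Matrix.IsHermitian
    rw [hH, Matrix.conjTranspose_smul, Matrix.conjTranspose_add,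
      Matrix.conjTranspose_conjTranspose, add_comm]
    congr 1
    simp
  have hKh : K.IsHermitian := by
    unfold Matrix.IsHermitian
    rw [hK, Matrix.conjTranspose_smul, Matrix.conjTranspose_sub,
      Matrix.conjTranspose_conjTranspose, ← neg_sub B Bᴴ, smul_neg, ← neg_smul]
    congr 1
    simp
    ring
  have hBHK : B = H + Complex.I • K := by
    rw [hH, hK]
    ext i j
    simp only [Matrix.add_apply, Matrix.smul_apply, Matrix.sub_apply, smul_eq_mul]
    linear_combination ((1 / 2 : ℂ) * (B i j - Bᴴ i j)) * Complex.I_mul_I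
  have hHp : ∀ x, x ≠ 0 → 0 < (qf H x).re := by
    intro x hx
    have e : qf H x = (1 / 2 : ℂ) * (qf B x + qf Bᴴ x) := by
      rw [hH, qf_smul_mat]
      unfold qf
      rw [Matrix.add_mulVec, dotProduct_add]
    have h2 := hpos x hx
    rw [e, qf_conjTranspose, hB, qf_smul_mat]
    have : (1 / 2 : ℂ) * (c * qf A x + star (c * qf A x)) = ((c * qf A x).re : ℂ) := by
      apply Complex.ext
      · simp; ring
      · simp; ring
    rw [this, Complex.ofReal_re]
    exact h2
  obtain ⟨S, hS, hHS⟩ := posdef_factor hHh hHp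
  have hSd : IsUnit S.det := (Matrix.isUnit_iff_isUnit_det S).1 hS
  have hSi : S⁻¹ * S = 1 := Matrix.nonsing_inv_mul S hSd
  have hSi' : Sᴴ * (S⁻¹)ᴴ = 1 := by
    rw [← Matrix.conjTranspose_mul, hSi, Matrix.conjTranspose_one]
  obtain ⟨U, d, hU, hUU, hd⟩ := herm_diag (H := (S⁻¹)ᴴ * K * S⁻¹)
    (Matrix.isHermitian_conjTranspose_mul_mul _ hKh)
  have hKd : K = (U * S)ᴴ * Matrix.diagonal (fun j => (d j : ℂ)) * (U * S) := by
    calc K = (Sᴴ * (S⁻¹)ᴴ) * K * (S⁻¹ * S) := by rw [hSi, hSi']; simp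
      _ = Sᴴ * ((S⁻¹)ᴴ * K * S⁻¹) * S := by simp only [Matrix.mul_assoc]
      _ = _ := by rw [hd, Matrix.conjTranspose_mul]; simp only [Matrix.mul_assoc]
  have hHd : H = (U * S)ᴴ * (U * S) := by
    calc H = Sᴴ * 1 * S := by rw [hHS, Matrix.mul_one]
      _ = _ := by rw [← hUU, Matrix.conjTranspose_mul]; simp only [Matrix.mul_assoc]
  set W := U * S with hW
  have hWu : IsUnit W := hU.mul hS
  set e : Fin n → ℂ := fun j => c⁻¹ * (1 + Complex.I * d j) with he
  have hAe : A = Wᴴ * Matrix.diagonal e * W := by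
    have h1 : A = c⁻¹ • B := by rw [hB, smul_smul, inv_mul_cancel₀ hc, one_smul]
    have h2 : Matrix.diagonal e
        = c⁻¹ • (1 + Complex.I • Matrix.diagonal (fun j => (d j : ℂ))) := by
      ext i j
      by_cases hij : i = j
      · subst hij; simp [he]
      · simp [hij]
    rw [h1, hBHK, h2, Matrix.mul_smul, Matrix.smul_mul, Matrix.mul_add, Matrix.add_mul,
      Matrix.mul_one, ← hHd, Matrix.mul_smul, Matrix.smul_mul, ← hKd]
  set φ : Fin n → ℝ := fun j => Complex.arg c⁻¹ + Real.arctan (d j) with hφ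
  have hpol : ∀ j, e j = (‖e j‖ : ℂ) * Complex.exp (Complex.I * (φ j : ℂ)) := by
    intro j
    have h1 : (1 + Complex.I * d j : ℂ)
        = (‖(1 + Complex.I * d j : ℂ)‖ : ℂ) * Complex.exp (Real.arctan (d j) * Complex.I) := by
      have : Complex.arg (1 + Complex.I * d j) = Real.arctan (d j) := by
        rw [Complex.arg_of_re_nonneg (by simp), Real.arctan_eq_arcsin]
        congr 1
        simp [Complex.norm_def, Complex.normSq_apply]
        ring_nf
      rw [← this]
      exact (Complex.norm_mul_exp_arg_mul_I _).symm
    have h2 := (Complex.norm_mul_exp_arg_mul_I c⁻¹).symm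
    have h3 : Complex.exp (Complex.I * (φ j : ℂ)) = Complex.exp (Complex.arg c⁻¹ * Complex.I)
        * Complex.exp (Real.arctan (d j) * Complex.I) := by
      rw [← Complex.exp_add]; congr 1; simp only [hφ]; push_cast; ring
    rw [h3]
    simp only [he]
    rw [norm_mul, Complex.ofReal_mul]
    conv_lhs => rw [h1, h2]
    ring
  have hen : ∀ j, 0 < ‖e j‖ := by
    intro j
    rw [norm_pos_iff]
    refine mul_ne_zero (inv_ne_zero hc) fun h => ?_
    have := congrArg Complex.re h
    simp at this
  refine ⟨Matrix.diagonal (fun j => ((Real.sqrt ‖e j‖ : ℝ) : ℂ)) * W, φ, ⟨?_, ?_⟩, ?_⟩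
  · refine IsUnit.mul ?_ hWu
    rw [Matrix.isUnit_diagonal, Pi.isUnit_iff]
    intro j
    have := (Real.sqrt_pos.2 (hen j)).ne'
    simpa only [isUnit_iff_ne_zero, ne_eq, Complex.ofReal_eq_zero] using this
  · unfold phaseDiag
    rw [Matrix.conjTranspose_mul, Matrix.diagonal_conjTranspose]
    have : Matrix.diagonal e = Matrix.diagonal (star fun j => ((Real.sqrt ‖e j‖ : ℝ) : ℂ))
        * Matrix.diagonal (fun j => Complex.exp (Complex.I * (φ j : ℂ)))
        * Matrix.diagonal (fun j => ((Real.sqrt ‖e j‖ : ℝ) : ℂ)) := by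
      rw [Matrix.diagonal_mul_diagonal, Matrix.diagonal_mul_diagonal]
      congr 1
      ext j
      simp only [Pi.star_apply, RCLike.star_def, Complex.conj_ofReal]
      rw [mul_right_comm, ← Complex.ofReal_mul, Real.mul_self_sqrt (hen j).le]
      exact hpol j
    rw [hAe, this]
    simp only [Matrix.mul_assoc]
  · intro i j
    have h1 := Real.arctan_lt_pi_div_two (d i)
    have h2 := Real.neg_pi_div_two_lt_arctan (d j)
    simp only [hφ]
    linarith

lemma decomp_perm {A T : Matrix (Fin n) (Fin n) ℂ} {φ : Fin n → ℝ}
    (hT : IsSectorialDecomp A T φ) (σ : Equiv.Perm (Fin n)) :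
    IsSectorialDecomp A (T.submatrix σ id) (φ ∘ σ) := by
  refine ⟨?_, ?_⟩
  · have : T.submatrix σ id = T.submatrix σ (Equiv.refl _) := rfl
    rw [this, Matrix.isUnit_submatrix_equiv]
    exact hT.1
  · have h1 : phaseDiag (φ ∘ σ) = (phaseDiag φ).submatrix σ σ := by
      unfold phaseDiag
      rw [Matrix.submatrix_diagonal_equiv]
      rfl
    rw [h1, Matrix.conjTranspose_submatrix, Matrix.submatrix_mul_equiv,
      Matrix.submatrix_mul_equiv, hT.2]
    rfl

lemma exists_canonical [NeZero n] {A : Matrix (Fin n) (Fin n) ℂ} (hA : IsSectorial A) :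
    ∃ φ, IsCanonicalPhases A φ := by
  obtain ⟨T, φ0, hT, hs⟩ := exists_decomp_raw hA
  -- sort
  obtain ⟨S, φ, hS, hs, ha⟩ : ∃ (S : Matrix (Fin n) (Fin n) ℂ) (φ : Fin n → ℝ),
      IsSectorialDecomp A S φ ∧ (∀ i j, φ i - φ j < Real.pi) ∧ Antitone φ := by
    refine ⟨_, _, decomp_perm hT (Tuple.sort (fun i => -φ0 i)), fun i j => hs _ _, ?_⟩
    intro i j hij
    have := Tuple.monotone_sort (fun i => -φ0 i) hij
    simpa using this
  have hpi : (0 : ℝ) < 2 * Real.pi := by positivity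
  set m := ((⨆ i, φ i) + ⨅ i, φ i) / 2 with hm
  set k := toIocDiv hpi (-Real.pi) m with hk
  have hmem := sub_toIocDiv_zsmul_mem_Ioc hpi (-Real.pi) m
  rw [zsmul_eq_mul, ← hk] at hmem
  set ψ : Fin n → ℝ := fun j => φ j + (-(k * (2 * Real.pi))) with hψ
  have hsup : ⨆ i, ψ i = (⨆ i, φ i) + (-(k * (2 * Real.pi))) := by
    rw [ciSup_add (Set.finite_range φ).bddAbove]
  have hinf : ⨅ i, ψ i = (⨅ i, φ i) + (-(k * (2 * Real.pi))) := by
    rw [ciInf_add (Set.finite_range φ).bddBelow]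
  refine ⟨ψ, fun i j hij => ?_, fun i j => ?_, ?_, ?_, S, hS.1, ?_⟩
  · have := ha hij
    simp only [hψ]; linarith
  · have := hs i j
    simp only [hψ]; linarith
  · rw [hsup, hinf]; have := hmem.1; linarith
  · rw [hsup, hinf]; have := hmem.2; linarith
  · rw [hS.2]
    congr 2
    unfold phaseDiag
    congr 1
    ext j
    rw [Complex.exp_eq_exp_iff_exists_int]
    refine ⟨k, ?_⟩
    simp only [hψ]
    push_cast
    ring

lemma phases_spec [NeZero n] {A : Matrix (Fin n) (Fin n) ℂ} (hA : IsSectorial A) :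
    IsCanonicalPhases A (phases A) := by
  have h := exists_canonical hA
  unfold phases
  rw [dif_pos h]
  exact h.choose_spec

lemma isUnit_of_decomp {A T : Matrix (Fin n) (Fin n) ℂ} {φ : Fin n → ℝ}
    (hT : IsSectorialDecomp A T φ) : IsUnit A := by
  rw [hT.2]
  refine (((Matrix.isUnit_conjTranspose _).2 hT.1).mul ?_).mul hT.1
  unfold phaseDiag
  rw [Matrix.isUnit_diagonal, Pi.isUnit_iff]
  intro j
  simp

lemma lower_bound [NeZero n] {A E : Matrix (Fin n) (Fin n) ℂ} (hA : PositiveImaginary A)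
    {r : ℕ} (hE : IsSectorial E) (hp : prank E ≤ r) (hC : PositiveImaginary (E⁻¹ * A * E⁻¹))
    (k l : Fin n) (hkl : (l : ℕ) = k + r) : phases A l ≤ phases (E⁻¹ * A * E⁻¹) k := by
  obtain ⟨aA, sA, -, -, T, hT⟩ := phases_spec hA.1
  obtain ⟨aC, sC, -, -, S, hS⟩ := phases_spec hC.1
  obtain ⟨-, -, -, -, R, hR⟩ := phases_spec hE
  have hEu := isUnit_of_decomp hR
  have hEd := (Matrix.isUnit_iff_isUnit_det E).1 hEu
  set C := E⁻¹ * A * E⁻¹ with hCdef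
  have hAC : A = E * C * E := by
    rw [hCdef]
    calc A = (E * E⁻¹) * A * (E⁻¹ * E) := by
          rw [Matrix.mul_nonsing_inv _ hEd, Matrix.nonsing_inv_mul _ hEd]; simp
      _ = _ := by simp only [Matrix.mul_assoc]
  have hM : IsSectorialDecomp (E * C * Eᴴ) (S * Eᴴ) (phases C) := by
    refine ⟨hS.1.mul ((Matrix.isUnit_conjTranspose _).2 hEu), ?_⟩
    conv_lhs => rw [hS.2]
    rw [Matrix.conjTranspose_mul, Matrix.conjTranspose_conjTranspose]
    simp only [Matrix.mul_assoc]
  refine compare (R := R) hT hM aA aC ?_ sC r (Finset.univ.filter fun j => phases E j ≠ 0) ?_ ?_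
    k l hkl
  · intro i j
    have := (hA.2 i).2
    have := (hC.2 j).1
    linarith
  · unfold prank at hp
    rw [Set.ncard_eq_toFinset_card'] at hp
    convert hp using 2
    ext j
    simp
  · intro x hx
    have hxE : E *ᵥ x = Eᴴ *ᵥ x := by
      have h1 : phaseDiag (phases E) *ᵥ (R *ᵥ x) = (phaseDiag (phases E))ᴴ *ᵥ (R *ᵥ x) := by
        unfold phaseDiag
        rw [Matrix.diagonal_conjTranspose]
        ext j
        rw [Matrix.mulVec_diagonal, Matrix.mulVec_diagonal]
        by_cases hj : phases E j = 0
        · simp [hj]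
        · rw [hx j (by simpa using hj)]; simp
      have h2 : Eᴴ = Rᴴ * (phaseDiag (phases E))ᴴ * R := by
        conv_lhs => rw [hR.2]
        rw [Matrix.conjTranspose_mul, Matrix.conjTranspose_mul,
          Matrix.conjTranspose_conjTranspose, Matrix.mul_assoc]
      rw [h2]
      conv_lhs => rw [hR.2]
      rw [← Matrix.mulVec_mulVec, ← Matrix.mulVec_mulVec, h1]
      simp only [← Matrix.mulVec_mulVec]
    unfold qf
    conv_lhs => rw [hAC]
    rw [← Matrix.mulVec_mulVec, hxE, Matrix.mulVec_mulVec]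

lemma attained [NeZero n] {A : Matrix (Fin n) (Fin n) ℂ} (hA : PositiveImaginary A)
    (r : ℕ) (hr : r ≤ n) {E : Matrix (Fin n) (Fin n) ℂ} (hE : E ∈ Sp A r) :
    IsSectorial E ∧ prank E ≤ r ∧ PositiveImaginary (E⁻¹ * A * E⁻¹) ∧
      phases (E⁻¹ * A * E⁻¹)
        = fun k : Fin n => if h : (k : ℕ) + r < n then phases A ⟨k + r, h⟩ else 0 := by
  obtain ⟨T, hT, hET⟩ := hE
  obtain ⟨aA, -⟩ := phases_spec hA.1
  set α := phases A with hα
  have hαI : ∀ k, α k ∈ Set.Ico 0 Real.pi := hA.2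
  -- phases of E
  set ε : Fin n → ℝ := fun k => if (k : ℕ) < r then α k / 2 else 0 with hε
  have hEd : IsSectorialDecomp E T ε := by
    refine ⟨hT.1, ?_⟩
    rw [hET]
    unfold phaseDiag
    congr 3
    ext k
    by_cases h : (k : ℕ) < r <;> simp [hε, h]
  have hεI : ∀ k, ε k ∈ Set.Ico 0 Real.pi := by
    intro k
    have := hαI k
    simp only [hε]
    split_ifs
    · exact ⟨by linarith [this.1], by linarith [this.1, this.2]⟩
    · exact ⟨le_rfl, Real.pi_pos⟩
  have hεa : Antitone ε := by
    intro i j hij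
    have h1 := aA hij
    have h2 := (hαI i).1
    have h3 : (i : ℕ) ≤ j := hij
    simp only [hε]
    split_ifs
    · linarith
    · omega
    · linarith
    · exact le_rfl
  obtain ⟨hEc, hEs⟩ := canonical_of_nonneg hEd hεa hεI
  have hEph := phases_eq hEc
  -- phases of C
  set β : Fin n → ℝ := fun k => if (k : ℕ) < r then 0 else α k with hβ
  set γ : Fin n → ℝ := fun k => if h : (k : ℕ) + r < n then α ⟨k + r, h⟩ else 0 with hγ
  have hTd := (Matrix.isUnit_iff_isUnit_det T).1 hT.1
  have hTi : T * T⁻¹ = 1 := Matrix.mul_nonsing_inv _ hTd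
  have hTi' : T⁻¹ * T = 1 := Matrix.nonsing_inv_mul _ hTd
  have hThi : (T⁻¹)ᴴ * Tᴴ = 1 := by rw [← Matrix.conjTranspose_mul, hTi, Matrix.conjTranspose_one]
  have hThi' : Tᴴ * (T⁻¹)ᴴ = 1 := by
    rw [← Matrix.conjTranspose_mul, hTi', Matrix.conjTranspose_one]
  have hneg : phaseDiag ε * phaseDiag (-ε) = 1 := by
    unfold phaseDiag
    rw [Matrix.diagonal_mul_diagonal, ← Matrix.diagonal_one]
    congr 1
    ext k
    rw [← Complex.exp_add]
    simp
  have hEinv : E⁻¹ = T⁻¹ * phaseDiag (-ε) * (T⁻¹)ᴴ := by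
    apply Matrix.inv_eq_right_inv
    rw [hEd.2]
    calc Tᴴ * phaseDiag ε * T * (T⁻¹ * phaseDiag (-ε) * (T⁻¹)ᴴ)
        = Tᴴ * phaseDiag ε * (T * T⁻¹) * phaseDiag (-ε) * (T⁻¹)ᴴ := by
          simp only [Matrix.mul_assoc]
      _ = Tᴴ * (phaseDiag ε * phaseDiag (-ε)) * (T⁻¹)ᴴ := by
          rw [hTi, Matrix.mul_one]; simp only [Matrix.mul_assoc]
      _ = 1 := by rw [hneg, Matrix.mul_one, hThi']
  have hβd : phaseDiag (-ε) * phaseDiag α * phaseDiag (-ε) = phaseDiag β := by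
    unfold phaseDiag
    rw [Matrix.diagonal_mul_diagonal, Matrix.diagonal_mul_diagonal]
    congr 1
    ext k
    rw [← Complex.exp_add, ← Complex.exp_add]
    congr 1
    by_cases h : (k : ℕ) < r
    · simp [hε, hβ, h]; ring
    · simp [hε, hβ, h]
  have hCd : IsSectorialDecomp (E⁻¹ * A * E⁻¹) (T⁻¹)ᴴ β := by
    refine ⟨(Matrix.isUnit_conjTranspose _).2 ((Matrix.isUnit_nonsing_inv_iff).2 hT.1), ?_⟩
    rw [Matrix.conjTranspose_conjTranspose, hEinv, ← hβd]
    conv_lhs => rw [hT.2]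
    calc T⁻¹ * phaseDiag (-ε) * (T⁻¹)ᴴ * (Tᴴ * phaseDiag α * T)
          * (T⁻¹ * phaseDiag (-ε) * (T⁻¹)ᴴ)
        = T⁻¹ * phaseDiag (-ε) * ((T⁻¹)ᴴ * Tᴴ) * phaseDiag α * (T * T⁻¹)
          * phaseDiag (-ε) * (T⁻¹)ᴴ := by simp only [Matrix.mul_assoc]
      _ = _ := by rw [hTi, hThi]; simp only [Matrix.mul_assoc, Matrix.mul_one, Matrix.one_mul]
  obtain ⟨σ, hσ⟩ := shift_perm α r hr
  have hCd' := decomp_perm hCd σ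
  rw [hσ] at hCd'
  have hγI : ∀ k, γ k ∈ Set.Ico 0 Real.pi := by
    intro k
    simp only [hγ]
    split_ifs
    · exact hαI _
    · exact ⟨le_rfl, Real.pi_pos⟩
  have hγa : Antitone γ := by
    intro i j hij
    have h3 : (i : ℕ) ≤ j := hij
    simp only [hγ]
    split_ifs
    · apply aA
      rw [Fin.mk_le_mk]
      omega
    · omega
    · exact (hαI _).1
    · exact le_rfl
  obtain ⟨hCc, hCs⟩ := canonical_of_nonneg hCd' hγa hγI
  have hCph := phases_eq hCc
  refine ⟨hEs, ?_, ⟨hCs, fun k => by rw [hCph]; exact hγI k⟩, hCph⟩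
  unfold prank
  rw [hEph]
  have hsub : {k : Fin n | ε k ≠ 0} ⊆ (Finset.univ.filter fun k : Fin n => (k : ℕ) < r) := by
    intro k hk
    by_contra hc
    apply hk
    have : ¬ (k : ℕ) < r := by simpa using hc
    simp [hε, this]
  refine (Set.ncard_le_ncard hsub (Finset.finite_toSet _)).trans ?_
  rw [Set.ncard_coe_finset, Fin.card_filter_val_lt]
  exact min_le_right _ _

/-- low phase-rank approximation (Schmidt-Mirsky counterpart),
positive-imaginary case. -/
theorem low_prank_approximation
    (hn : 1 ≤ n) (Φ : (Fin n → ℝ) → ℝ) (hΦ : IsSymmetricGauge Φ)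
    (A : Matrix (Fin n) (Fin n) ℂ) (hA : PositiveImaginary A)
    (r : ℕ) (hr : r ≤ n) :
    IsLeast {v : ℝ | ∃ E : Matrix (Fin n) (Fin n) ℂ, IsSectorial E ∧ prank E ≤ r ∧
        PositiveImaginary (E⁻¹ * A * E⁻¹) ∧ v = Φ (phases (E⁻¹ * A * E⁻¹))}
      (Φ fun k => if (k : ℕ) < r then 0 else phases A k) ∧
    ∀ E ∈ Sp A r, IsSectorial E ∧ prank E ≤ r ∧ PositiveImaginary (E⁻¹ * A * E⁻¹) ∧
      Φ (phases (E⁻¹ * A * E⁻¹)) = Φ fun k => if (k : ℕ) < r then 0 else phases A k := by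
  have : NeZero n := ⟨by omega⟩
  obtain ⟨σ, hσ⟩ := shift_perm (phases A) r hr
  have hshift : Φ (fun k : Fin n => if h : (k : ℕ) + r < n then phases A ⟨k + r, h⟩ else 0)
      = Φ fun k : Fin n => if (k : ℕ) < r then 0 else phases A k := by
    rw [← hσ, hΦ.perm]
  have hatt : ∀ E ∈ Sp A r, IsSectorial E ∧ prank E ≤ r ∧ PositiveImaginary (E⁻¹ * A * E⁻¹) ∧
      Φ (phases (E⁻¹ * A * E⁻¹)) = Φ fun k => if (k : ℕ) < r then 0 else phases A k := by
    intro E hE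
    obtain ⟨h1, h2, h3, h4⟩ := attained hA r hr hE
    exact ⟨h1, h2, h3, by rw [h4, hshift]⟩
  refine ⟨⟨?_, ?_⟩, hatt⟩
  · obtain ⟨-, -, -, -, T, hT⟩ := phases_spec hA.1
    obtain ⟨h1, h2, h3, h4⟩ := hatt _ ⟨T, hT, rfl⟩
    exact ⟨_, h1, h2, h3, h4.symm⟩
  · rintro v ⟨E, hE, hp, hC, rfl⟩
    rw [← hshift]
    apply gauge_mono hΦ
    intro k
    rw [abs_of_nonneg (hC.2 k).1]
    by_cases h : (k : ℕ) + r < n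
    · rw [dif_pos h, abs_of_nonneg (hA.2 _).1]
      exact lower_bound hA hE hp hC k ⟨k + r, h⟩ rfl
    · rw [dif_neg h, abs_zero]
      exact (hC.2 k).1

end LowPrank
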